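/- Let A ∈ ℝ^{m×n}, y ∈ ℝ^m, let x* ∈ ℝⁿ be k-sparse and set η = y − Ax*. Let q ≥ 2k be a positive integer, set t = ⌈q/k⌉, and let δ₁ ≤ δ₂ ≤ δ₃ be restricted isometry constants of orders k, 2k, 3k for A. Suppose δ₃ < 1/(3((√5+1)/2)²(t+1) + 1). Let (x^p) be a PGROTP sequence for (A, y, k, q). Then ρ* := ((√5+1)/2)²·3(t+1)δ₃/(1−δ₃) < 1 and for every p ≥ 0: ‖x^{p+1} − x*‖₂ ≤ (ρ*)^p‖x^0 − x*‖₂ + (τ*/(1−ρ*))‖η‖₂, where τ* = [3((√5+1)/2)²(t+1)(1+δ₁) + √5 + 1]/((1−δ₂)√(1+δ₂)) + √(1+δ₁)/(1−δ₂). -/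

import Mathlib

/-!
Each iteration contracts the error: `‖x^{p+1} - x*‖ ≤ ρ ‖x^p - x*‖ + τ ‖η‖`; the theorem then
follows by summing a geometric series.

Write `d = x* - x^p`, which is `2k`-sparse, let `g = Aᵀ(y - Ax^p) = Aᵀ(Ad + η)`, and let `K` be a
set of `k` indices containing the support of `x*`.

* By the restricted isometry property, `g - d` has norm at most `ε = δ₃ ‖d‖ + √(1+δ₁) ‖η‖` on
  every set of `k` indices (`nrm_restr_gradient_error_le`). Since `q ≥ 2k`, the entries of `g` lost
  by the thresholding are dominated by entries outside the support of `d`, where `g = g - d`.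
  Hence `u = x^p + h` satisfies `‖(u - x*)_B‖ ≤ 3 ε` whenever `|B| ≤ k`
  (`nrm_restr_partial_gradient_le`).
* Let `b = w ⊗ u`. By optimality of `w` against the indicator of `K`, the residual of `b` is at
  most `‖η‖ + 3 √(1+δ₁) ε`. The part of `b` outside `K ∪ S` lives on at most `q + k ≤ (t+1) k`
  indices, so it consists of `t + 1` blocks whose images have norm at most `3 √(1+δ₁) ε`. This
  bounds `‖(x* - b)_{K ∪ S}‖` (`nrm_restr_relaxed_le`).
* The part of `x*` missed by `S` is at most `√2` times that quantity (`nrm_restr_missed_le`), and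
  orthogonality of the least-squares residual bounds `‖x^{p+1} - x*‖` by the missed part
  (`nrm_pursuit_le`).

The constants of the statement come out because `√2 ≤ φ` and `t + 2 ≤ φ (t + 1)` for the golden
ratio `φ` and `t ≥ 2` (`one_step_constants`).
-/

open Matrix Finset Filter

/-- Euclidean (ℓ₂) norm of a vector. -/
noncomputable def nrm {n : ℕ} (x : Fin n → ℝ) : ℝ := Real.sqrt (∑ i, x i ^ 2)

/-- A vector is `s`-sparse if it has at most `s` nonzero entries. -/
def sparse {n : ℕ} (s : ℕ) (x : Fin n → ℝ) : Prop :=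
  ((Finset.univ : Finset (Fin n)).filter fun i => x i ≠ 0).card ≤ s

/-- Support of a vector, as a finset. -/
noncomputable def suppF {n : ℕ} (x : Fin n → ℝ) : Finset (Fin n) :=
  (Finset.univ : Finset (Fin n)).filter fun i => x i ≠ 0

/-- Restriction of a vector to an index set (zero outside). -/
def restr {n : ℕ} (x : Fin n → ℝ) (Ω : Finset (Fin n)) : Fin n → ℝ :=
  fun i => if i ∈ Ω then x i else 0

/-- `δ ∈ [0,1)` is a restricted isometry constant of order `s` for `A`. -/
def RIC {m n : ℕ} (A : Matrix (Fin m) (Fin n) ℝ) (s : ℕ) (δ : ℝ) : Prop :=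
  0 ≤ δ ∧ δ < 1 ∧ ∀ x : Fin n → ℝ, sparse s x →
    (1 - δ) * nrm x ^ 2 ≤ nrm (A.mulVec x) ^ 2 ∧
      nrm (A.mulVec x) ^ 2 ≤ (1 + δ) * nrm x ^ 2

/-- `h` is a hard thresholding of `z` at level `q` with support `Ω`. -/
def IsHT {n : ℕ} (q : ℕ) (z h : Fin n → ℝ) (Ω : Finset (Fin n)) : Prop :=
  Ω.card = q ∧ (∀ i ∈ Ω, h i = z i) ∧ (∀ i ∉ Ω, h i = 0) ∧
    ∀ i ∈ Ω, ∀ j ∉ Ω, |z j| ≤ |z i|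

/-- A PGROTP iterate sequence for `(A, y, k, q)`. -/
def IsPGROTPSeq {m n : ℕ} (A : Matrix (Fin m) (Fin n) ℝ) (y : Fin m → ℝ) (k q : ℕ)
    (x : ℕ → Fin n → ℝ) : Prop :=
  x 0 = 0 ∧ ∀ p : ℕ, ∃ (h : Fin n → ℝ) (Ω : Finset (Fin n)) (w v : Fin n → ℝ)
      (S : Finset (Fin n)),
    IsHT q (Aᵀ.mulVec (y - A.mulVec (x p))) h Ω ∧
    (∑ i, w i) = (k : ℝ) ∧ (∀ i, 0 ≤ w i ∧ w i ≤ 1) ∧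
    (∀ w' : Fin n → ℝ, (∑ i, w' i) = (k : ℝ) → (∀ i, 0 ≤ w' i ∧ w' i ≤ 1) →
      nrm (y - A.mulVec (fun i => w i * (x p i + h i))) ^ 2 ≤
        nrm (y - A.mulVec (fun i => w' i * (x p i + h i))) ^ 2) ∧
    IsHT k (fun i => w i * (x p i + h i)) v S ∧
    suppF (x (p + 1)) ⊆ S ∧
    (∀ z : Fin n → ℝ, suppF z ⊆ S →
      nrm (y - A.mulVec (x (p + 1))) ≤ nrm (y - A.mulVec z))

/-! ### Euclidean norm and restrictions -/

lemma le_of_sq_le_sq_real {a b : ℝ} (h : a ^ 2 ≤ b ^ 2) (hb : 0 ≤ b) : a ≤ b :=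
  abs_le_of_sq_le_sq' h hb |>.2

lemma nrm_eq_norm {n : ℕ} (x : Fin n → ℝ) : nrm x = ‖WithLp.toLp 2 x‖ := by
  simp [nrm, EuclideanSpace.norm_eq]

lemma nrm_nonneg {n : ℕ} (x : Fin n → ℝ) : 0 ≤ nrm x := Real.sqrt_nonneg _

lemma nrm_sq {n : ℕ} (x : Fin n → ℝ) : nrm x ^ 2 = ∑ i, x i ^ 2 :=
  Real.sq_sqrt (Finset.sum_nonneg fun _ _ => sq_nonneg _)

lemma nrm_sq_dot {n : ℕ} (x : Fin n → ℝ) : nrm x ^ 2 = x ⬝ᵥ x := by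
  rw [nrm_sq]; simp [dotProduct, sq]

lemma nrm_add_le {n : ℕ} (x y : Fin n → ℝ) : nrm (x + y) ≤ nrm x + nrm y := by
  simp only [nrm_eq_norm, WithLp.toLp_add]; exact norm_add_le _ _

lemma nrm_neg {n : ℕ} (x : Fin n → ℝ) : nrm (-x) = nrm x := by
  simp only [nrm_eq_norm, WithLp.toLp_neg, norm_neg]

lemma nrm_zero {n : ℕ} : nrm (0 : Fin n → ℝ) = 0 := by simp [nrm]

lemma dot_le {n : ℕ} (x y : Fin n → ℝ) : x ⬝ᵥ y ≤ nrm x * nrm y := by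
  simpa [nrm, dotProduct] using Real.sum_mul_le_sqrt_mul_sqrt Finset.univ x y

lemma eq_zero_of_nrm {n : ℕ} {x : Fin n → ℝ} (h : nrm x = 0) : x = 0 := by
  have h2 := nrm_sq_dot x
  rw [h] at h2
  exact dotProduct_self_eq_zero.mp (by simpa using h2.symm)

lemma nrm_restr_sq {n : ℕ} (x : Fin n → ℝ) (B : Finset (Fin n)) :
    nrm (restr x B) ^ 2 = ∑ i ∈ B, x i ^ 2 := by
  simp [nrm_sq, restr, ite_pow]

lemma dot_restr {n : ℕ} (x : Fin n → ℝ) (B : Finset (Fin n)) :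
    x ⬝ᵥ restr x B = nrm (restr x B) ^ 2 := by
  rw [nrm_restr_sq]; simp [dotProduct, restr, sq]

/-- Monotonicity of the restricted norm, in the entries and in the index set at once. -/
lemma nrm_restr_mono {n : ℕ} {x y : Fin n → ℝ} {B C : Finset (Fin n)} (hBC : B ⊆ C)
    (h : ∀ i ∈ B, |x i| ≤ |y i|) : nrm (restr x B) ≤ nrm (restr y C) := by
  refine le_of_sq_le_sq_real ?_ (nrm_nonneg _)
  rw [nrm_restr_sq, nrm_restr_sq]
  exact (Finset.sum_le_sum fun i hi => sq_le_sq.mpr (h i hi)).trans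
    (Finset.sum_le_sum_of_subset_of_nonneg hBC fun _ _ _ => sq_nonneg _)

lemma restr_union {n : ℕ} (x : Fin n → ℝ) {B C : Finset (Fin n)} (h : Disjoint B C) :
    restr x (B ∪ C) = restr x B + restr x C := by
  funext i
  have hd : i ∈ B → i ∉ C := fun hi => Finset.disjoint_left.mp h hi
  by_cases hB : i ∈ B <;> by_cases hC : i ∈ C <;> simp_all [restr]

lemma restr_add {n : ℕ} (x y : Fin n → ℝ) (B : Finset (Fin n)) :
    restr (x + y) B = restr x B + restr y B := by
  funext i; by_cases hB : i ∈ B <;> simp [restr, hB]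

lemma restr_eq_self {n : ℕ} {x : Fin n → ℝ} {B : Finset (Fin n)} (h : ∀ i ∉ B, x i = 0) :
    restr x B = x := by
  funext i
  by_cases hB : i ∈ B
  · simp [restr, hB]
  · simp [restr, hB, h i hB]

lemma restr_of_notMem {n : ℕ} (x : Fin n → ℝ) {B : Finset (Fin n)} {i : Fin n} (h : i ∉ B) :
    restr x B i = 0 := by simp [restr, h]

lemma sparse_of {n s : ℕ} {x : Fin n → ℝ} (T : Finset (Fin n)) (hT : T.card ≤ s)
    (h : ∀ i ∉ T, x i = 0) : sparse s x := by
  refine (Finset.card_le_card ?_).trans hT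
  intro i hi
  by_contra hc
  exact (Finset.mem_filter.mp hi).2 (h i hc)

/-- If every entry of `z` on `D` dominates every entry on the (not larger) set `C`, then so do
the norms of the restrictions. -/
lemma nrm_restr_le_of_dominated {n : ℕ} (z : Fin n → ℝ) (C D : Finset (Fin n))
    (hc : C.card ≤ D.card) (h : ∀ i ∈ D, ∀ j ∈ C, |z j| ≤ |z i|) :
    nrm (restr z C) ≤ nrm (restr z D) := by
  refine le_of_sq_le_sq_real ?_ (nrm_nonneg _)
  rw [nrm_restr_sq, nrm_restr_sq]
  rcases C.eq_empty_or_nonempty with rfl | hne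
  · simpa using Finset.sum_nonneg fun i _ => sq_nonneg (z i)
  · obtain ⟨a, ha, hmax⟩ := Finset.exists_max_image C (fun i => z i ^ 2) hne
    calc ∑ i ∈ C, z i ^ 2 ≤ C.card • z a ^ 2 := Finset.sum_le_card_nsmul _ _ _ hmax
      _ ≤ D.card • z a ^ 2 := nsmul_le_nsmul_left (sq_nonneg _) hc
      _ ≤ ∑ i ∈ D, z i ^ 2 :=
        Finset.card_nsmul_le_sum _ _ _ fun i hi => sq_le_sq.mpr (h i hi a ha)

/-! ### Consequences of the restricted isometry property -/

lemma RIC.nrm_mulVec_le {m n s : ℕ} {A : Matrix (Fin m) (Fin n) ℝ} {δ : ℝ} (h : RIC A s δ)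
    {x : Fin n → ℝ} (hx : sparse s x) : nrm (A *ᵥ x) ≤ √(1 + δ) * nrm x := by
  refine le_of_sq_le_sq_real ?_ (mul_nonneg (Real.sqrt_nonneg _) (nrm_nonneg _))
  rw [mul_pow, Real.sq_sqrt (by linarith [h.1])]
  exact (h.2.2 x hx).2

lemma RIC.le_nrm_mulVec {m n s : ℕ} {A : Matrix (Fin m) (Fin n) ℝ} {δ : ℝ} (h : RIC A s δ)
    {x : Fin n → ℝ} (hx : sparse s x) : √(1 - δ) * nrm x ≤ nrm (A *ᵥ x) := by
  refine le_of_sq_le_sq_real ?_ (nrm_nonneg _)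
  rw [mul_pow, Real.sq_sqrt (by linarith [h.2.1])]
  exact (h.2.2 x hx).1

/-- The form `⟨Au, Av⟩ - ⟨u, v⟩` is bounded by `δ` on vectors with a common small support:
polarization, applied to `‖v‖ u` and `‖u‖ v`. -/
lemma RIC.dot_le {m n s : ℕ} {A : Matrix (Fin m) (Fin n) ℝ} {δ : ℝ} (h : RIC A s δ)
    (T : Finset (Fin n)) (hT : T.card ≤ s) (u v : Fin n → ℝ)
    (hu : ∀ i ∉ T, u i = 0) (hv : ∀ i ∉ T, v i = 0) :
    |(A *ᵥ u) ⬝ᵥ (A *ᵥ v) - u ⬝ᵥ v| ≤ δ * nrm u * nrm v := by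
  rcases (nrm_nonneg u).eq_or_lt with h0 | hu0
  · rw [eq_zero_of_nrm h0.symm]; simp [nrm_zero]
  rcases (nrm_nonneg v).eq_or_lt with h0 | hv0
  · rw [eq_zero_of_nrm h0.symm]; simp [nrm_zero]
  have e1 := h.2.2 (nrm v • u + nrm u • v)
    (sparse_of T hT fun i hi => by simp [hu i hi, hv i hi])
  have e2 := h.2.2 (nrm v • u - nrm u • v)
    (sparse_of T hT fun i hi => by simp [hu i hi, hv i hi])
  have c1 : v ⬝ᵥ u = u ⬝ᵥ v := dotProduct_comm _ _
  have c2 : (A *ᵥ v) ⬝ᵥ (A *ᵥ u) = (A *ᵥ u) ⬝ᵥ (A *ᵥ v) := dotProduct_comm _ _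
  simp only [nrm_sq_dot, mulVec_add, mulVec_sub, mulVec_smul, dotProduct_add, add_dotProduct,
    dotProduct_sub, sub_dotProduct, dotProduct_smul, smul_dotProduct, smul_eq_mul, c1, c2]
    at e1 e2
  rw [← nrm_sq_dot u, ← nrm_sq_dot v] at e1 e2
  have hp : 0 < nrm u * nrm v := mul_pos hu0 hv0
  rw [abs_le]
  constructor
  · refine le_of_mul_le_mul_left ?_ hp
    linarith [e1.1, e2.2]
  · refine le_of_mul_le_mul_left ?_ hp
    linarith [e1.2, e2.1]

lemma dot_transpose_mulVec {m n : ℕ} (A : Matrix (Fin m) (Fin n) ℝ) (r : Fin m → ℝ)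
    (v : Fin n → ℝ) : (Aᵀ *ᵥ r) ⬝ᵥ v = r ⬝ᵥ (A *ᵥ v) := by
  rw [mulVec_transpose, dotProduct_mulVec]

/-- For a `2k`-sparse `d`, the vector `Aᵀ(Ad + η) - d` is small on every set of at most `k`
indices. -/
lemma nrm_restr_gradient_error_le {m n k : ℕ} {A : Matrix (Fin m) (Fin n) ℝ} {δ₁ δ₃ : ℝ}
    (h1 : RIC A k δ₁) (h3 : RIC A (3 * k) δ₃) (T B : Finset (Fin n)) (hT : T.card ≤ 2 * k)
    (hB : B.card ≤ k) (d : Fin n → ℝ) (hd : ∀ i ∉ T, d i = 0) (η : Fin m → ℝ) :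
    nrm (restr (Aᵀ *ᵥ (A *ᵥ d + η) - d) B) ≤ δ₃ * nrm d + √(1 + δ₁) * nrm η := by
  set e := Aᵀ *ᵥ (A *ᵥ d + η) - d with he
  rcases (nrm_nonneg (restr e B)).eq_or_lt with h0 | hpos
  · rw [← h0]
    exact add_nonneg (mul_nonneg h3.1 (nrm_nonneg _))
      (mul_nonneg (Real.sqrt_nonneg _) (nrm_nonneg _))
  have hz : ∀ i ∉ B, restr e B i = 0 := fun i hi => restr_of_notMem _ hi
  have k1 := h3.dot_le (T ∪ B) ((Finset.card_union_le _ _).trans (by omega)) d (restr e B)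
    (fun i hi => hd i fun hc => hi (Finset.mem_union_left _ hc))
    (fun i hi => hz i fun hc => hi (Finset.mem_union_right _ hc))
  have k2 := dot_le η (A *ᵥ restr e B)
  have k3 := mul_le_mul_of_nonneg_left (h1.nrm_mulVec_le (sparse_of B hB hz)) (nrm_nonneg η)
  have k4 : nrm (restr e B) ^ 2 =
      ((A *ᵥ d) ⬝ᵥ (A *ᵥ restr e B) - d ⬝ᵥ restr e B) + η ⬝ᵥ (A *ᵥ restr e B) := by
    rw [← dot_restr]
    nth_rewrite 1 [he]
    rw [sub_dotProduct, dot_transpose_mulVec, add_dotProduct]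
    ring
  have k5 := (abs_le.mp k1).2
  refine le_of_mul_le_mul_right ?_ hpos
  nlinarith

/-- Splitting an index set into `N` blocks of at most `k` indices. -/
lemma nrm_mulVec_restr_le_blocks {m n : ℕ} (A : Matrix (Fin m) (Fin n) ℝ) (b : Fin n → ℝ)
    (k : ℕ) (M : ℝ) (N : ℕ) : ∀ C : Finset (Fin n), C.card ≤ N * k →
    (∀ B ⊆ C, B.card ≤ k → nrm (A *ᵥ restr b B) ≤ M) → nrm (A *ᵥ restr b C) ≤ N * M := by
  induction N with
  | zero =>
    intro C hC _
    have : C = ∅ := Finset.card_eq_zero.mp (by omega)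
    subst this
    have h0 : restr b ∅ = 0 := by funext i; simp [restr]
    simp [h0, nrm_zero]
  | succ N ih =>
    intro C hC hM
    obtain ⟨B, hBC, hB⟩ := Finset.exists_subset_card_eq (min_le_right k C.card)
    have hcard : (C \ B).card ≤ N * k := by
      have := Finset.card_sdiff_add_card_eq_card hBC
      rw [add_one_mul] at hC
      omega
    have h1 := ih (C \ B) hcard fun B' hB' => hM B' (hB'.trans Finset.sdiff_subset)
    have h2 := hM B hBC (hB.le.trans (min_le_left _ _))
    have h3 : restr b C = restr b (C \ B) + restr b B := by
      rw [← restr_union b Finset.sdiff_disjoint, Finset.sdiff_union_of_subset hBC]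
    rw [h3, mulVec_add]
    refine (nrm_add_le _ _).trans ?_
    push_cast
    linarith

/-! ### The three steps of an iteration -/

/-- Partial gradient step: if `d = x* - x` is supported in `T` with `|T| ≤ 2k ≤ q`, the updated
vector `x + h` is close to `x*` on every set of at most `k` indices. Inside `Ω` the error is the
gradient error. Outside `Ω` it is `-d`, and there the thresholding rule lets the gradient be
dominated by its entries on `Ω \ T`, where it coincides with the gradient error. -/
lemma nrm_restr_partial_gradient_le {m n k q : ℕ} {A : Matrix (Fin m) (Fin n) ℝ} {δ₁ δ₃ : ℝ}
    (hq : 2 * k ≤ q) (h1 : RIC A k δ₁) (h3 : RIC A (3 * k) δ₃) (T B Ω : Finset (Fin n))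
    (hT : T.card ≤ 2 * k) (hB : B.card ≤ k) (xs x h : Fin n → ℝ)
    (hd : ∀ i ∉ T, (xs - x) i = 0) (η : Fin m → ℝ)
    (hh : IsHT q (Aᵀ *ᵥ (A *ᵥ (xs - x) + η)) h Ω) :
    nrm (restr (x + h - xs) B) ≤ 3 * (δ₃ * nrm (xs - x) + √(1 + δ₁) * nrm η) := by
  set d := xs - x with hdd
  set g := Aᵀ *ᵥ (A *ᵥ d + η) with hg
  have key : ∀ B : Finset (Fin n), B.card ≤ k →
      nrm (restr (g - d) B) ≤ δ₃ * nrm d + √(1 + δ₁) * nrm η := fun B hB =>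
    nrm_restr_gradient_error_le h1 h3 T B hT hB d hd η
  obtain ⟨hΩ, hin, hout, hdom⟩ := hh
  have hxd : ∀ i, x i - xs i = - d i := fun i => by simp [hdd]
  set C := (B ∩ T) \ Ω with hC
  have hCB : C ⊆ B := Finset.sdiff_subset.trans Finset.inter_subset_left
  have hCk : C.card ≤ k := (Finset.card_le_card hCB).trans hB
  have hCcard : C.card ≤ (Ω \ T).card := by
    have a1 : C.card ≤ (T \ Ω).card :=
      Finset.card_le_card (Finset.sdiff_subset_sdiff Finset.inter_subset_right subset_rfl)
    have a2 := Finset.card_sdiff_add_card_inter T Ω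
    have a3 := Finset.card_sdiff_add_card_inter Ω T
    rw [Finset.inter_comm] at a3
    omega
  obtain ⟨D, hDsub, hD⟩ := Finset.exists_subset_card_eq hCcard
  have s1 : restr (x + h - xs) B = restr (x + h - xs) (B ∩ Ω) + restr (x + h - xs) (B \ Ω) := by
    rw [← restr_union _ (Finset.disjoint_sdiff_inter B Ω).symm, Finset.union_comm,
      Finset.sdiff_union_inter]
  have s2 : nrm (restr (x + h - xs) (B ∩ Ω)) ≤ nrm (restr (g - d) B) := by
    refine nrm_restr_mono Finset.inter_subset_left fun i hi => le_of_eq ?_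
    have := hin i (Finset.mem_inter.mp hi).2
    congr 1
    simp only [Pi.add_apply, Pi.sub_apply, this]
    linarith [hxd i]
  have s3 : nrm (restr (x + h - xs) (B \ Ω)) ≤ nrm (restr d C) := by
    have e : restr (x + h - xs) (B \ Ω) = restr (-d) C := by
      funext i
      by_cases hiT : i ∈ T
      · by_cases hi : i ∈ B ∧ i ∉ Ω
        · have := hout i hi.2
          have hx := hxd i
          simp [restr, hC, hi.1, hi.2, hiT, this, hx]
        · have : ¬ (i ∈ B ∧ i ∈ T ∧ i ∉ Ω) := fun hc => hi ⟨hc.1, hc.2.2⟩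
          simp [restr, hC, hi, this, and_assoc]
      · have hx := hxd i
        rw [hd i hiT] at hx
        by_cases hi : i ∈ B ∧ i ∉ Ω
        · simp [restr, hC, hi.1, hi.2, hiT, hout i hi.2, hx]
        · simp [restr, hC, hi, hiT]
    rw [e]
    exact nrm_restr_mono subset_rfl fun i _ => by simp
  have s4 : nrm (restr d C) ≤ nrm (restr g C) + nrm (restr (g - d) C) := by
    have e : d = g + -(g - d) := by abel
    have e2 : restr (-(g - d)) C = -restr (g - d) C := by
      funext i; by_cases hi : i ∈ C <;> simp [restr, hi]
    calc nrm (restr d C) = nrm (restr g C + -restr (g - d) C) := by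
          rw [← e2, ← restr_add, ← e]
      _ ≤ _ := by rw [← nrm_neg (restr (g - d) C)]; exact nrm_add_le _ _
  have s5 : nrm (restr g C) ≤ nrm (restr (g - d) D) := by
    refine (nrm_restr_le_of_dominated g C D hD.ge fun i hi j hj => ?_).trans
      (nrm_restr_mono subset_rfl fun i hi => ?_)
    · exact hdom i (Finset.mem_sdiff.mp (hDsub hi)).1 j (Finset.mem_sdiff.mp hj).2
    · rw [Pi.sub_apply, hd i (Finset.mem_sdiff.mp (hDsub hi)).2, sub_zero]
  have s6 := nrm_add_le (restr (x + h - xs) (B ∩ Ω)) (restr (x + h - xs) (B \ Ω))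
  rw [← s1] at s6
  linarith [key B hB, key C hCk, key D (hD.le.trans hCk)]

/-- Thresholding step: the part of `x*` missed by the support `S` of a hard thresholding of `b`
is controlled by `x* - b` on `K ∪ S`. -/
lemma nrm_restr_missed_le {n k : ℕ} (xs b v : Fin n → ℝ) (K S : Finset (Fin n))
    (hK : K.card = k) (hv : IsHT k b v S) (hxs : ∀ i ∉ K, xs i = 0) :
    nrm (restr xs (K \ S)) ≤ √2 * nrm (restr (xs - b) (K ∪ S)) := by
  obtain ⟨hS, -, -, hdom⟩ := hv
  have hcard : (K \ S).card ≤ (S \ K).card := by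
    have a2 := Finset.card_sdiff_add_card_inter K S
    have a3 := Finset.card_sdiff_add_card_inter S K
    rw [Finset.inter_comm] at a3
    omega
  have s1 : nrm (restr xs (K \ S)) ≤ nrm (restr (xs - b) (K \ S)) + nrm (restr b (K \ S)) := by
    have := nrm_add_le (restr (xs - b) (K \ S)) (restr b (K \ S))
    rwa [← restr_add, sub_add_cancel] at this
  have s2 : nrm (restr b (K \ S)) ≤ nrm (restr (xs - b) (S \ K)) :=
    (nrm_restr_le_of_dominated b _ _ hcard fun i hi j hj =>
      hdom i (Finset.mem_sdiff.mp hi).1 j (Finset.mem_sdiff.mp hj).2).trans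
      (nrm_restr_mono subset_rfl fun i hi => by simp [hxs i (Finset.mem_sdiff.mp hi).2])
  have s3 : nrm (restr (xs - b) (K \ S)) ^ 2 + nrm (restr (xs - b) (S \ K)) ^ 2
      ≤ nrm (restr (xs - b) (K ∪ S)) ^ 2 := by
    rw [nrm_restr_sq, nrm_restr_sq, nrm_restr_sq, ← Finset.sum_union]
    · exact Finset.sum_le_sum_of_subset_of_nonneg
        (Finset.union_subset_union Finset.sdiff_subset Finset.sdiff_subset)
        fun _ _ _ => sq_nonneg _
    · exact disjoint_sdiff_sdiff
  refine le_of_sq_le_sq_real ?_ (mul_nonneg (Real.sqrt_nonneg _) (nrm_nonneg _))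
  rw [mul_pow, Real.sq_sqrt (by norm_num)]
  nlinarith [sq_nonneg (nrm (restr (xs - b) (K \ S)) - nrm (restr (xs - b) (S \ K))),
    nrm_nonneg (restr xs (K \ S))]

/-- Solving `F² ≤ b² + (δF + N)²` for `F`. -/
lemma le_of_sq_le_sq_add {F b N δ : ℝ} (hb : 0 ≤ b) (hN : 0 ≤ N) (hδ0 : 0 ≤ δ)
    (hδ1 : δ < 1) (h : F ^ 2 ≤ b ^ 2 + (δ * F + N) ^ 2) :
    F ≤ b / √(1 - δ ^ 2) + N / (1 - δ) := by
  have hs : 0 < 1 - δ ^ 2 := by nlinarith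
  have hsq := Real.sq_sqrt hs.le
  have hspos := Real.sqrt_pos.mpr hs
  set s := √(1 - δ ^ 2)
  have hN' : N = (1 - δ) * (N / (1 - δ)) := by field_simp [sub_ne_zero.mpr hδ1.ne']
  by_contra! hc
  set G := F - N / (1 - δ) with hG
  have hbG : b < G * s := by rw [← div_lt_iff₀ hspos]; linarith
  have hNd : 0 ≤ N / (1 - δ) := div_nonneg hN (by linarith)
  have hGpos : 0 < G := pos_of_mul_pos_left (hb.trans_lt hbG) hspos.le
  have h1 : b ^ 2 < (1 - δ ^ 2) * G ^ 2 := by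
    have := pow_lt_pow_left₀ hbG hb (n := 2) (by norm_num)
    nlinarith
  have h2 : F ^ 2 - (δ * F + N) ^ 2 = (1 - δ) * G * ((1 + δ) * F + N) := by
    have : (1 - δ) * G = F - δ * F - N := by rw [hG]; linarith
    rw [this]; ring
  have h3 : (1 + δ) * G ≤ (1 + δ) * F + N := by
    nlinarith [mul_nonneg (by linarith : (0 : ℝ) ≤ 1 + δ) hNd]
  nlinarith [mul_le_mul_of_nonneg_left h3 (mul_nonneg (by linarith : (0 : ℝ) ≤ 1 - δ) hGpos.le)]

/-- A residual of a least-squares problem over the vectors supported in `S` is orthogonal to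
the image of these vectors. -/
lemma dot_residual_eq_zero {m n : ℕ} (A : Matrix (Fin m) (Fin n) ℝ) (y : Fin m → ℝ)
    (S : Finset (Fin n)) (x z : Fin n → ℝ) (hx : suppF x ⊆ S)
    (hmin : ∀ z, suppF z ⊆ S → nrm (y - A *ᵥ x) ≤ nrm (y - A *ᵥ z)) (hz : ∀ i ∉ S, z i = 0) :
    (y - A *ᵥ x) ⬝ᵥ (A *ᵥ z) = 0 := by
  set r := y - A *ᵥ x with hr
  set a := A *ᵥ z
  have hx0 : ∀ i ∉ S, x i = 0 := fun i hi => by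
    by_contra hc
    exact hi (hx (by simpa [suppF] using hc))
  have key : ∀ c : ℝ, 0 ≤ c ^ 2 * (a ⬝ᵥ a) - 2 * c * (r ⬝ᵥ a) := by
    intro c
    have h1 := hmin (x + c • z) (fun i hi => by
      by_contra hc
      simp [suppF, hx0 i hc, hz i hc] at hi)
    have h2 : y - A *ᵥ (x + c • z) = r - c • a := by
      rw [mulVec_add, mulVec_smul, hr]; abel
    rw [h2] at h1
    have h3 := pow_le_pow_left₀ (nrm_nonneg _) h1 2
    have c1 : a ⬝ᵥ r = r ⬝ᵥ a := dotProduct_comm _ _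
    simp only [nrm_sq_dot, dotProduct_sub, sub_dotProduct, dotProduct_smul, smul_dotProduct,
      smul_eq_mul, c1] at h3
    linarith
  have ha : 0 ≤ a ⬝ᵥ a := by rw [← nrm_sq_dot]; positivity
  -- The quadratic in `c` is nonnegative; evaluate it close to its minimizer.
  have h := key ((r ⬝ᵥ a) / (a ⬝ᵥ a + 1))
  have hpos : 0 < a ⬝ᵥ a + 1 := by linarith
  have e : ((r ⬝ᵥ a) / (a ⬝ᵥ a + 1)) ^ 2 * (a ⬝ᵥ a) - 2 * ((r ⬝ᵥ a) / (a ⬝ᵥ a + 1)) * (r ⬝ᵥ a)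
      = -((r ⬝ᵥ a) ^ 2 * (a ⬝ᵥ a + 2)) / (a ⬝ᵥ a + 1) ^ 2 := by
    field_simp; ring
  rw [e, le_div_iff₀ (by positivity)] at h
  nlinarith [sq_nonneg (r ⬝ᵥ a)]

/-- Pursuit step: the least-squares solution on `S` is as close to `x*` as the part of `x*`
missed by `S` allows. -/
lemma nrm_pursuit_le {m n k : ℕ} {A : Matrix (Fin m) (Fin n) ℝ} {δ₁ δ₂ : ℝ}
    (h1 : RIC A k δ₁) (h2 : RIC A (2 * k) δ₂) (xs x : Fin n → ℝ) (η : Fin m → ℝ)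
    (K S : Finset (Fin n)) (hK : K.card = k) (hS : S.card = k) (hxs : ∀ i ∉ K, xs i = 0)
    (hx : suppF x ⊆ S)
    (hmin : ∀ z, suppF z ⊆ S → nrm (A *ᵥ xs + η - A *ᵥ x) ≤ nrm (A *ᵥ xs + η - A *ᵥ z)) :
    nrm (x - xs) ≤ nrm (restr xs (K \ S)) / √(1 - δ₂ ^ 2) + √(1 + δ₁) * nrm η / (1 - δ₂) := by
  have hx0 : ∀ i ∉ S, x i = 0 := fun i hi => by
    by_contra hc
    exact hi (hx (by simpa [suppF] using hc))
  set f := xs - x with hf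
  have hfz : ∀ i ∉ K ∪ S, f i = 0 := fun i hi => by
    rw [Finset.mem_union, not_or] at hi
    simp [hf, hxs i hi.1, hx0 i hi.2]
  have hfS : ∀ i ∉ S, restr f S i = 0 := fun i hi => restr_of_notMem _ hi
  have orth := dot_residual_eq_zero A (A *ᵥ xs + η) S x (restr f S) hx hmin hfS
  have hres : A *ᵥ xs + η - A *ᵥ x = A *ᵥ f + η := by rw [hf, mulVec_sub]; abel
  rw [hres, add_dotProduct] at orth
  have k1 := (abs_le.mp (h2.dot_le (K ∪ S) ((Finset.card_union_le _ _).trans (by omega)) f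
    (restr f S) hfz (fun i hi => hfS i fun hc => hi (Finset.mem_union_right _ hc)))).1
  have k2 := dot_le (-η) (A *ᵥ restr f S)
  rw [nrm_neg, neg_dotProduct] at k2
  have k3 := mul_le_mul_of_nonneg_left (h1.nrm_mulVec_le (sparse_of S hS.le hfS)) (nrm_nonneg η)
  rw [dot_restr] at k1
  have hN : 0 ≤ √(1 + δ₁) * nrm η := mul_nonneg (Real.sqrt_nonneg _) (nrm_nonneg _)
  have ka : nrm (restr f S) ≤ δ₂ * nrm f + √(1 + δ₁) * nrm η := by
    rcases (nrm_nonneg (restr f S)).eq_or_lt with h0 | hpos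
    · rw [← h0]
      exact add_nonneg (mul_nonneg h2.1 (nrm_nonneg _)) hN
    · refine le_of_mul_le_mul_right ?_ hpos
      nlinarith
  have ks : nrm f ^ 2 = nrm (restr xs (K \ S)) ^ 2 + nrm (restr f S) ^ 2 := by
    have e : restr xs (K \ S) = restr f (K \ S) := by
      funext i
      by_cases hi : i ∈ K \ S
      · simp [restr, hf, hx0 i (Finset.mem_sdiff.mp hi).2]
      · simp only [restr, hi, if_false]
    rw [← restr_eq_self hfz, e, restr_eq_self hfz, nrm_restr_sq, nrm_restr_sq, ← Finset.sum_union
      Finset.sdiff_disjoint, Finset.sdiff_union_self_eq_union, ← nrm_restr_sq, restr_eq_self hfz]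
  have hneg : nrm (x - xs) = nrm f := by rw [hf, ← nrm_neg (x - xs), neg_sub]
  rw [hneg]
  refine le_of_sq_le_sq_add (nrm_nonneg _) hN h2.1 h2.2.1 ?_
  rw [ks]
  linarith [pow_le_pow_left₀ (nrm_nonneg _) ka 2]

/-! ### One iteration and convergence -/

/-- Relaxed thresholding step: a minimizer `w` of the relaxed problem yields a vector
`b = w ⊗ (x + h)` close to `x*` on `K ∪ S`. The objective is compared with its value at the
indicator of `K`, and the part of `b` outside `K ∪ S` is split into `t + 1` blocks. -/
lemma nrm_restr_relaxed_le {m n k q t : ℕ} {A : Matrix (Fin m) (Fin n) ℝ} {δ₁ δ₂ δ₃ : ℝ}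
    (hq : 2 * k ≤ q) (hqt : q ≤ t * k) (h1 : RIC A k δ₁) (h2 : RIC A (2 * k) δ₂)
    (h3 : RIC A (3 * k) δ₃) (xs x h w : Fin n → ℝ) (η : Fin m → ℝ) (K S P Ω : Finset (Fin n))
    (hK : K.card = k) (hS : S.card = k) (hP : P.card ≤ k) (hxs : ∀ i ∉ K, xs i = 0)
    (hx : ∀ i ∉ P, x i = 0) (hh : IsHT q (Aᵀ *ᵥ (A *ᵥ (xs - x) + η)) h Ω)
    (hw : ∀ i, 0 ≤ w i ∧ w i ≤ 1)
    (hmin : ∀ w' : Fin n → ℝ, (∑ i, w' i) = (k : ℝ) → (∀ i, 0 ≤ w' i ∧ w' i ≤ 1) →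
      nrm (A *ᵥ xs + η - A *ᵥ fun i => w i * (x i + h i)) ^ 2 ≤
        nrm (A *ᵥ xs + η - A *ᵥ fun i => w' i * (x i + h i)) ^ 2) :
    √(1 - δ₂) * nrm (restr (xs - fun i => w i * (x i + h i)) (K ∪ S)) ≤
      2 * nrm η + ((t : ℝ) + 2) *
        (√(1 + δ₁) * (3 * (δ₃ * nrm (xs - x) + √(1 + δ₁) * nrm η))) := by
  set b : Fin n → ℝ := fun i => w i * (x i + h i) with hb
  set M := √(1 + δ₁) * (3 * (δ₃ * nrm (xs - x) + √(1 + δ₁) * nrm η)) with hM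
  have hu : ∀ B : Finset (Fin n), B.card ≤ k → √(1 + δ₁) * nrm (restr (x + h - xs) B) ≤ M :=
    fun B hB => mul_le_mul_of_nonneg_left
      (nrm_restr_partial_gradient_le hq h1 h3 (K ∪ P) B Ω
        ((Finset.card_union_le _ _).trans (by omega)) hB xs x h
        (fun i hi => by
          rw [Finset.mem_union, not_or] at hi
          simp [hxs i hi.1, hx i hi.2]) η hh) (Real.sqrt_nonneg _)
  -- Comparison with the indicator of `K`.
  have hres : nrm (A *ᵥ xs + η - A *ᵥ b) ≤ nrm η + M := by
    have c1 := hmin (fun i => if i ∈ K then 1 else 0) (by simp [hK])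
      (fun i => by by_cases hi : i ∈ K <;> simp [hi])
    have c2 := le_of_sq_le_sq_real c1 (nrm_nonneg _)
    have c3 : A *ᵥ xs + η - A *ᵥ (fun i => (if i ∈ K then (1 : ℝ) else 0) * (x i + h i)) =
        η + -(A *ᵥ restr (x + h - xs) K) := by
      have : (fun i => (if i ∈ K then (1 : ℝ) else 0) * (x i + h i)) =
          xs + restr (x + h - xs) K := by
        funext i
        by_cases hi : i ∈ K
        · simp [restr, hi]
        · simp [restr, hi, hxs i hi]
      rw [this, mulVec_add]; abel
    rw [c3] at c2
    have c4 := nrm_add_le η (-(A *ᵥ restr (x + h - xs) K))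
    rw [nrm_neg] at c4
    have c5 := h1.nrm_mulVec_le (sparse_of K hK.le
      fun i hi => restr_of_notMem (x + h - xs) hi)
    linarith [hu K hK.le]
  -- The part of `b` outside `K ∪ S`.
  set C := (P ∪ Ω) \ (K ∪ S) with hC
  have hCcard : C.card ≤ (t + 1) * k := by
    have a1 : C.card ≤ (P ∪ Ω).card := Finset.card_le_card Finset.sdiff_subset
    have a2 := Finset.card_union_le P Ω
    have a3 := hh.1
    rw [add_one_mul]
    omega
  have hCn := nrm_mulVec_restr_le_blocks A b k M (t + 1) C hCcard fun B hBC hB => by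
    refine (h1.nrm_mulVec_le (sparse_of B hB fun i hi => restr_of_notMem b hi)).trans
      (le_trans ?_ (hu B hB))
    refine mul_le_mul_of_nonneg_left (nrm_restr_mono subset_rfl fun i hi => ?_)
      (Real.sqrt_nonneg _)
    have hiK : i ∉ K := fun hc =>
      (Finset.mem_sdiff.mp (hBC hi)).2 (Finset.mem_union_left _ hc)
    simp only [hb, Pi.add_apply, Pi.sub_apply, hxs i hiK, sub_zero, abs_mul,
      abs_of_nonneg (hw i).1]
    exact mul_le_of_le_one_left (abs_nonneg _) (hw i).2
  have hdec : restr (xs - b) (K ∪ S) = xs - b + restr b C := by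
    funext i
    by_cases hi : i ∈ K ∪ S
    · have : i ∉ C := fun hc => (Finset.mem_sdiff.mp hc).2 hi
      simp only [restr, hi, this, if_true, if_false, Pi.add_apply, add_zero]
    · have hiK : i ∉ K := fun hc => hi (Finset.mem_union_left _ hc)
      by_cases hiC : i ∈ C
      · simp only [restr, hi, hiC, if_true, if_false, Pi.add_apply, Pi.sub_apply, hxs i hiK]
        ring
      · have hPO : i ∉ P ∪ Ω := fun hc => hiC (Finset.mem_sdiff.mpr ⟨hc, hi⟩)
        rw [Finset.mem_union, not_or] at hPO
        simp [restr, hi, hiC, hxs i hiK, hb, hx i hPO.1, hh.2.2.1 i hPO.2]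
  refine (h2.le_nrm_mulVec (sparse_of (K ∪ S) ((Finset.card_union_le _ _).trans (by omega))
    fun i hi => restr_of_notMem (xs - b) hi)).trans ?_
  have e : A *ᵥ restr (xs - b) (K ∪ S) =
      (A *ᵥ xs + η - A *ᵥ b) + -η + A *ᵥ restr b C := by
    rw [hdec, mulVec_add, mulVec_sub]; abel
  rw [e]
  have d1 := nrm_add_le (A *ᵥ xs + η - A *ᵥ b + -η) (A *ᵥ restr b C)
  have d2 := nrm_add_le (A *ᵥ xs + η - A *ᵥ b) (-η)
  rw [nrm_neg] at d2
  push_cast at hCn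
  linarith

/-- The constants of the one-step estimate: the thresholding factor `√2` and the slack
`t + 2 ≤ φ (t + 1)`, valid for `t ≥ 2`, are absorbed in powers of the golden ratio `φ`. -/
lemma one_step_constants {δ₁ δ₂ δ₃ t D N E R F ρ τ : ℝ} (hd1 : 0 ≤ δ₁) (h12 : δ₁ ≤ δ₂)
    (h23 : δ₂ ≤ δ₃) (hd3 : δ₃ < 1) (ht : 2 ≤ t) (hD : 0 ≤ D) (hN : 0 ≤ N) (hE : 0 ≤ E)
    (hρ : ρ = ((√5 + 1) / 2) ^ 2 * (3 * (t + 1) * δ₃) / (1 - δ₃))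
    (hτ : τ = (3 * ((√5 + 1) / 2) ^ 2 * (t + 1) * (1 + δ₁) + √5 + 1) /
      ((1 - δ₂) * √(1 + δ₂)) + √(1 + δ₁) / (1 - δ₂))
    (h1 : √(1 - δ₂) * E ≤
      2 * N + (t + 2) * (√(1 + δ₁) * (3 * (δ₃ * D + √(1 + δ₁) * N))))
    (h2 : R ≤ √2 * E) (h3 : F ≤ R / √(1 - δ₂ ^ 2) + √(1 + δ₁) * N / (1 - δ₂)) :
    F ≤ ρ * D + τ * N := by
  have h5 : √5 ^ 2 = 5 := Real.sq_sqrt (by norm_num)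
  have h5' : 2 ≤ √5 := Real.le_sqrt_of_sq_le (by norm_num)
  set φ := (√5 + 1) / 2 with hφ
  have hφ1 : 3 / 2 ≤ φ := by rw [hφ]; linarith
  have h2φ : √2 ≤ φ := Real.sqrt_le_iff.mpr ⟨by linarith, by nlinarith⟩
  have htφ : t + 2 ≤ φ * (t + 1) := by nlinarith
  have hb : 0 < 1 - δ₂ := by linarith
  have hp : 0 < 1 + δ₂ := by linarith
  have hfac : √(1 - δ₂ ^ 2) = √(1 - δ₂) * √(1 + δ₂) := by
    rw [← Real.sqrt_mul hb.le]; congr 1; ring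
  have hs := Real.sq_sqrt hb.le
  have hs0 := Real.sqrt_pos.mpr hb
  have hp0 := Real.sqrt_pos.mpr hp
  have ha := Real.sq_sqrt (by linarith : 0 ≤ 1 + δ₁)
  have ha0 := Real.sqrt_nonneg (1 + δ₁)
  have hap : √(1 + δ₁) ≤ √(1 + δ₂) := Real.sqrt_le_sqrt (by linarith)
  rw [hfac] at h3
  set s := √(1 - δ₂)
  set p := √(1 + δ₂)
  set a := √(1 + δ₁)
  have hd3' : 0 ≤ δ₃ := by linarith
  -- Bound for the missed part, over the common denominator `(1 - δ₂) √(1 + δ₂)`.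
  have hM : φ * (s * E) ≤ (3 * φ ^ 2 * (t + 1) * δ₃ * D) * a +
      (3 * φ ^ 2 * (t + 1) * (1 + δ₁) + √5 + 1) * N := by
    have hX : 0 ≤ a * (3 * (δ₃ * D + a * N)) := by positivity
    have hm := mul_le_mul_of_nonneg_right htφ hX
    have := mul_le_mul_of_nonneg_left (h1.trans (add_le_add_right hm (2 * N)))
      (by linarith : 0 ≤ φ)
    refine this.trans (le_of_eq ?_)
    have hsq : √5 + 1 = 2 * φ := by rw [hφ]; ring
    rw [← ha, add_assoc _ (√5) 1, hsq]
    ring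
  have hR : R / (s * p) ≤ φ * (s * E) / ((1 - δ₂) * p) := by
    rw [div_le_div_iff₀ (by positivity) (by positivity), ← hs]
    have hRE : R ≤ φ * E := h2.trans (mul_le_mul_of_nonneg_right h2φ hE)
    have := mul_le_mul_of_nonneg_right hRE (by positivity : 0 ≤ s ^ 2 * p)
    linarith
  have hX : 0 ≤ 3 * φ ^ 2 * (t + 1) * δ₃ * D := by positivity
  have hr : 3 * φ ^ 2 * (t + 1) * δ₃ * D * a / ((1 - δ₂) * p) ≤ ρ * D := by
    calc 3 * φ ^ 2 * (t + 1) * δ₃ * D * a / ((1 - δ₂) * p)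
        ≤ 3 * φ ^ 2 * (t + 1) * δ₃ * D * p / ((1 - δ₂) * p) := by gcongr
      _ = 3 * φ ^ 2 * (t + 1) * δ₃ * D / (1 - δ₂) := by field_simp
      _ ≤ 3 * φ ^ 2 * (t + 1) * δ₃ * D / (1 - δ₃) :=
        div_le_div_of_nonneg_left hX (by linarith) (by linarith)
      _ = ρ * D := by rw [hρ]; ring
  have hfin : φ * (s * E) / ((1 - δ₂) * p) ≤ ((3 * φ ^ 2 * (t + 1) * δ₃ * D) * a +
      (3 * φ ^ 2 * (t + 1) * (1 + δ₁) + √5 + 1) * N) / ((1 - δ₂) * p) := by gcongr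
  rw [add_div] at hfin
  have : τ * N = (3 * φ ^ 2 * (t + 1) * (1 + δ₁) + √5 + 1) * N / ((1 - δ₂) * p) +
      a * N / (1 - δ₂) := by rw [hτ]; ring
  linarith

theorem stmt9 {m n : ℕ} (k q : ℕ) (hk : 0 < k) (hq : 2 * k ≤ q)
    (A : Matrix (Fin m) (Fin n) ℝ) (y : Fin m → ℝ)
    (xs : Fin n → ℝ) (hxs : sparse k xs) (η : Fin m → ℝ) (hη : η = y - A.mulVec xs)
    (t : ℕ) (ht : t = ⌈(q : ℝ) / (k : ℝ)⌉₊)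
    (δ₁ δ₂ δ₃ : ℝ) (h1 : RIC A k δ₁) (h2 : RIC A (2 * k) δ₂) (h3 : RIC A (3 * k) δ₃)
    (h12 : δ₁ ≤ δ₂) (h23 : δ₂ ≤ δ₃)
    (hδ : δ₃ < 1 / (3 * ((Real.sqrt 5 + 1) / 2) ^ 2 * ((t : ℝ) + 1) + 1))
    (x : ℕ → Fin n → ℝ) (hx : IsPGROTPSeq A y k q x)
    (ρ τ : ℝ)
    (hρ : ρ = ((Real.sqrt 5 + 1) / 2) ^ 2 * (3 * ((t : ℝ) + 1) * δ₃) / (1 - δ₃))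
    (hτ : τ = (3 * ((Real.sqrt 5 + 1) / 2) ^ 2 * ((t : ℝ) + 1) * (1 + δ₁) +
      Real.sqrt 5 + 1) / ((1 - δ₂) * Real.sqrt (1 + δ₂)) +
      Real.sqrt (1 + δ₁) / (1 - δ₂)) :
    ρ < 1 ∧ ∀ p : ℕ,
      nrm (x (p + 1) - xs) ≤ ρ ^ p * nrm (x 0 - xs) + τ / (1 - ρ) * nrm η := by
  have hd3 := h3.2.1
  have hd3' := h3.1
  have h5' : 2 ≤ √5 := Real.le_sqrt_of_sq_le (by norm_num)
  have hk' : (0 : ℝ) < k := by exact_mod_cast hk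
  have hqt : q ≤ t * k := by
    have : (q : ℝ) / k ≤ t := by rw [ht]; exact Nat.le_ceil _
    rw [div_le_iff₀ hk'] at this
    exact_mod_cast this
  have ht2 : 2 ≤ t := Nat.le_of_mul_le_mul_right (hq.trans hqt) hk
  have ht2' : (2 : ℝ) ≤ t := by exact_mod_cast ht2
  have hρ1 : ρ < 1 := by
    rw [lt_div_iff₀ (by positivity)] at hδ
    rw [hρ, div_lt_one (by linarith)]
    linarith
  have hρ0 : 0 ≤ ρ := by
    rw [hρ]; exact div_nonneg (by positivity) (by linarith)
  have hτ0 : 0 ≤ τ := by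
    have := h1.1
    have := h2.2.1
    rw [hτ]
    exact add_nonneg (div_nonneg (by positivity)
      (mul_nonneg (by linarith) (Real.sqrt_nonneg _)))
      (div_nonneg (Real.sqrt_nonneg _) (by linarith))
  have hy : y = A *ᵥ xs + η := by rw [hη]; abel
  -- Every iterate is supported on at most `k` indices.
  have hsupp : ∀ p, ∃ P : Finset (Fin n), P.card ≤ k ∧ ∀ i ∉ P, x p i = 0 := by
    rintro (_ | p)
    · exact ⟨∅, by simp, fun i _ => by simp [hx.1]⟩
    · obtain ⟨h, Ω, w, v, S, -, -, -, -, hv, hS, -⟩ := hx.2 p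
      exact ⟨S, hv.1.le, fun i hi => by
        by_contra hc
        exact hi (hS (by simpa [suppF] using hc))⟩
  have step : ∀ p, nrm (x (p + 1) - xs) ≤ ρ * nrm (x p - xs) + τ * nrm η := by
    intro p
    obtain ⟨P, hP, hPx⟩ := hsupp p
    obtain ⟨h, Ω, w, v, S, hh, -, hw, hmin, hv, hS, hls⟩ := hx.2 p
    rw [hy] at hmin hls
    have hr : y - A *ᵥ x p = A *ᵥ (xs - x p) + η := by rw [hy, mulVec_sub]; abel
    rw [hr] at hh
    -- Enlarge the support of `xs` to exactly `k` indices, possible since `k ≤ q ≤ n`.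
    obtain ⟨K, hKsub, -, hK⟩ := Finset.exists_subsuperset_card_eq (n := k)
      (Finset.subset_univ (Finset.univ.filter fun i => xs i ≠ 0)) hxs (by
        have := Finset.card_le_card (Finset.subset_univ Ω)
        have := hh.1
        omega)
    have hKx : ∀ i ∉ K, xs i = 0 := fun i hi => by
      by_contra hc
      exact hi (hKsub (by simpa using hc))
    have r1 := nrm_restr_relaxed_le hq hqt h1 h2 h3 xs (x p) h w η K S P Ω hK hv.1 hP hKx hPx hh
      hw hmin
    have r2 := nrm_restr_missed_le xs _ v K S hK hv hKx
    have r3 := nrm_pursuit_le h1 h2 xs (x (p + 1)) η K S hK hv.1 hKx hS hls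
    have := one_step_constants h1.1 h12 h23 hd3 ht2' (nrm_nonneg _) (nrm_nonneg η)
      (nrm_nonneg _) hρ hτ r1 r2 r3
    rwa [← neg_sub (x p) xs, nrm_neg (x p - xs)] at this
  have geom : ∀ p, nrm (x p - xs) ≤ ρ ^ p * nrm (x 0 - xs) + τ / (1 - ρ) * nrm η := by
    intro p
    induction p with
    | zero =>
      have : 0 ≤ τ / (1 - ρ) * nrm η :=
        mul_nonneg (div_nonneg hτ0 (by linarith)) (nrm_nonneg _)
      simpa using this
    | succ p ih =>
      refine (step p).trans ?_
      have e : τ = (1 - ρ) * (τ / (1 - ρ)) := by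
        field_simp [sub_ne_zero.mpr hρ1.ne']
      have := mul_le_mul_of_nonneg_left ih hρ0
      have e2 : τ * nrm η = (1 - ρ) * (τ / (1 - ρ)) * nrm η := by rw [← e]
      rw [e2, pow_succ]
      linarith
  refine ⟨hρ1, fun p => (geom (p + 1)).trans ?_⟩
  gcongr ?_ * _ + _
  · exact nrm_nonneg _
  · exact pow_le_pow_of_le_one hρ0 hρ1.le (Nat.le_succ p)
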